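/- Let K be a number field and k ≥ 1 an integer. Let A be an additive group automorphism of 𝓞_K and let f : 𝕏_{K,k} → 𝕏_{K,k} be a homeomorphism satisfying f(t + X) = A(t) + f(X) for all t ∈ 𝓞_K and X ∈ 𝕏_{K,k}. Then there exist a field automorphism τ of K, a unit ε ∈ 𝓞_K^×, and t₀ ∈ 𝓞_K such that A(x) = ε·τ(x) for all x ∈ 𝓞_K and f(X) = t₀ + ε·τ(X) := {t₀ + ε·τ(x) : x ∈ X} for all X ∈ 𝕏_{K,k}. Conversely, every such pair (A, f), with A(x) = ε·τ(x) and f(X) = t₀ + ε·τ(X) for a field automorphism τ of K, a unit ε ∈ 𝓞_K^×, and t₀ ∈ 𝓞_K, is such an extended symmetry (in particular ε·τ(X) ∈ 𝕏_{K,k} whenever X ∈ 𝕏_{K,k}, and f is a homeomorphism). -/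

import Mathlib

open NumberField

/-- The product (Cantor) topology on the power set `𝒫(G) ≅ {0,1}^G`. -/
noncomputable instance powerSetTopology (G : Type*) : TopologicalSpace (Set G) :=
  TopologicalSpace.induced
    (fun (S : Set G) (g : G) => @decide (g ∈ S) (Classical.propDecidable _))
    inferInstance

/-- The shift space `𝕏_{K,k}` of admissible sets: subsets of `𝓞 K` missing at least
one residue class modulo `𝔭^k` for every nonzero prime ideal `𝔭`. -/
def admissibleSets (K : Type*) [Field K] [NumberField K] (k : ℕ) : Set (Set (𝓞 K)) :=
  {X | ∀ P : Ideal (𝓞 K), P.IsPrime → P ≠ ⊥ → ∃ c : 𝓞 K, ∀ y ∈ X, y - c ∉ P ^ k}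


lemma es_exists_nonunit {K : Type*} [Field K] [NumberField K] (M : ℕ) (hM : M ≠ 0)
    (b : 𝓞 K) (hb : b ≠ 0) : ∃ x : ℕ, ¬ IsUnit (1 - (M : 𝓞 K) * x * b) := by
  classical
  obtain ⟨x, hx⟩ : ∃ x : ℕ, ∀ w : InfinitePlace K, 3 ≤ (x : ℝ) * w (b : K) := by
    have hpos : ∀ w : InfinitePlace K, 0 < w (b : K) := fun w => by
      rw [InfinitePlace.pos_iff]; simpa using hb
    have : ∀ w : InfinitePlace K, ∃ x : ℕ, 3 ≤ (x : ℝ) * w (b : K) := fun w => by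
      obtain ⟨n, hn⟩ := exists_nat_ge (3 / w (b : K))
      exact ⟨n, by rwa [div_le_iff₀ (hpos w)] at hn⟩
    choose g hg using this
    refine ⟨∑ w, g w, fun w => (hg w).trans ?_⟩
    gcongr
    exact Finset.single_le_sum (f := g) (fun _ _ => Nat.zero_le _) (Finset.mem_univ w)
  refine ⟨x, fun hu => ?_⟩
  have h1 := (NumberField.isUnit_iff_norm).1 hu
  have h2 := InfinitePlace.prod_eq_abs_norm (K := K) (((1 - (M : 𝓞 K) * x * b : 𝓞 K)) : K)
  rw [RingOfIntegers.coe_norm] at h1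
  rw [h1] at h2
  have h3 : ∀ w : InfinitePlace K, 2 ≤ w (((1 - (M : 𝓞 K) * x * b : 𝓞 K)) : K) := fun w => by
    have h4 : w (((M : 𝓞 K) * x * b : 𝓞 K) : K) = M * (x * w (b : K)) := by
      simp [mul_assoc]
    have h5 : (3:ℝ) ≤ w (((M : 𝓞 K) * x * b : 𝓞 K) : K) := by
      rw [h4]
      have : (1:ℝ) ≤ M := by exact_mod_cast Nat.one_le_iff_ne_zero.2 hM
      nlinarith [hx w]
    have h7 : w (((M : 𝓞 K) * x * b : 𝓞 K) : K) ≤ w 1 + w (((1 - (M : 𝓞 K) * x * b : 𝓞 K)) : K) := by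
      have := w.1.add_le (1 : K) (-(((1 - (M : 𝓞 K) * x * b : 𝓞 K)) : K))
      rw [w.1.map_neg] at this
      have e : (1 : K) + -(((1 - (M : 𝓞 K) * x * b : 𝓞 K)) : K) = (((M : 𝓞 K) * x * b : 𝓞 K) : K) := by
        simp
      rw [e] at this
      exact this
    rw [map_one] at h7
    linarith
  have w0 : InfinitePlace K := Classical.arbitrary _
  have : (1:ℝ) < ∏ w : InfinitePlace K, w (((1 - (M : 𝓞 K) * x * b : 𝓞 K)) : K) ^ w.mult := by
    have := Finset.prod_lt_prod (s := Finset.univ) (f := fun _ : InfinitePlace K => (1:ℝ))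
      (g := fun w : InfinitePlace K => w (((1 - (M : 𝓞 K) * x * b : 𝓞 K)) : K) ^ w.mult)
      (fun _ _ => one_pos) (fun w _ => one_le_pow₀ (by linarith [h3 w]))
      ⟨w0, Finset.mem_univ _, one_lt_pow₀ (by linarith [h3 w0]) InfinitePlace.mult_ne_zero⟩
    simpa using this
  rw [h2] at this
  norm_num at this

lemma es_exists_gen (K : Type*) [Field K] [NumberField K] :
    ∃ (b : 𝓞 K) (D : ℤ), b ≠ 0 ∧ D ≠ 0 ∧ ∀ y : 𝓞 K, ∃ q : Polynomial ℤ,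
      (D : 𝓞 K) * y = Polynomial.aeval b q := by
  obtain ⟨a, ha⟩ := Field.exists_primitive_element ℚ K
  have hint : IsIntegral ℚ a := Algebra.IsIntegral.isIntegral a
  obtain ⟨n, hn0, hn⟩ : ∃ n : ℤ, n ≠ 0 ∧ IsIntegral ℤ (n • a) := by
    obtain ⟨y, hy, h⟩ := exists_integral_multiples ℤ ℚ ({a} : Finset K)
    exact ⟨y, hy, h a (by simp)⟩
  have hint' : IsIntegral ℚ (n • a) := hn.tower_top
  have htop : Algebra.adjoin ℚ {n • a} = ⊤ := by
    have h1 : Algebra.adjoin ℚ {a} = ⊤ := by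
      rwa [← IntermediateField.adjoin_simple_eq_top_iff_of_isAlgebraic hint.isAlgebraic]
    rw [eq_top_iff, ← h1]
    refine Algebra.adjoin_le ?_
    intro z hz
    rw [Set.mem_singleton_iff] at hz
    subst hz
    have : z = (n : ℚ)⁻¹ • (n • z) := by
      rw [← Int.cast_smul_eq_zsmul ℚ, smul_smul, inv_mul_cancel₀ (by exact_mod_cast hn0), one_smul]
    have h2 : (n : ℚ)⁻¹ • (n • z) ∈ Algebra.adjoin ℚ {n • z} :=
      Subalgebra.smul_mem _ (Algebra.subset_adjoin (Set.mem_singleton _)) _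
    rw [← this] at h2
    exact h2
  let B := PowerBasis.ofAdjoinEqTop hint' htop
  have hgen : B.gen = n • a := PowerBasis.ofAdjoinEqTop_gen _ _
  have hgi : IsIntegral ℤ B.gen := by rw [hgen]; exact hn
  let b : 𝓞 K := ⟨B.gen, hgi⟩
  have hd : Algebra.discr ℚ B.basis ≠ 0 := Algebra.discr_not_zero_of_basis ℚ B.basis
  have main : ∀ y : 𝓞 K, ∃ q : Polynomial ℤ,
      (((Algebra.discr ℚ B.basis).num : ℤ) : 𝓞 K) * y = Polynomial.aeval b q := by
    intro y
    have h := Algebra.discr_mul_isIntegral_mem_adjoin ℚ (R := ℤ) hgi (RingOfIntegers.isIntegral_coe y)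
    rw [Algebra.adjoin_singleton_eq_range_aeval] at h
    obtain ⟨q, hq⟩ := h
    refine ⟨Polynomial.C ((Algebra.discr ℚ B.basis).den : ℤ) * q, ?_⟩
    apply RingOfIntegers.ext
    have hb : algebraMap (𝓞 K) K (Polynomial.aeval b q) = Polynomial.aeval B.gen q := by
      rw [← Polynomial.aeval_algebraMap_apply]; rfl
    rw [map_mul (Polynomial.aeval b)]
    change algebraMap (𝓞 K) K _ = algebraMap (𝓞 K) K _
    rw [map_mul, map_mul, hb]
    have : (Polynomial.aeval B.gen) q = Algebra.discr ℚ B.basis • (y : K) := hq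
    rw [this, Algebra.smul_def]
    have h3 := Rat.den_mul_eq_num (Algebra.discr ℚ B.basis)
    have h4 := congrArg (algebraMap ℚ K) h3
    simp only [map_mul, map_natCast, map_intCast] at h4
    rw [map_intCast, ← h4, Polynomial.aeval_C, ← mul_assoc]
    simp only [map_natCast]
  by_cases hb : b = 0
  · refine ⟨1, (Algebra.discr ℚ B.basis).num, one_ne_zero, Rat.num_ne_zero.2 hd, fun y => ?_⟩
    obtain ⟨q, hq⟩ := main y
    refine ⟨Polynomial.C (q.coeff 0), ?_⟩
    rw [hq, hb, Polynomial.aeval_C, Polynomial.aeval_def, Polynomial.eval₂_at_zero]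
  · exact ⟨b, _, hb, Rat.num_ne_zero.2 hd, main⟩

/-- primes of degree one avoiding a given integer -/
lemma es_exists_deg_one (K : Type*) [Field K] [NumberField K] (M : ℕ) (hM : M ≠ 0) :
    ∃ (p : ℕ) (Q : Ideal (𝓞 K)), p.Prime ∧ ¬ p ∣ M ∧ Q.IsPrime ∧ Q ≠ ⊥ ∧ Ideal.absNorm Q = p := by
  obtain ⟨b, D, hb, hD, hgen⟩ := es_exists_gen K
  obtain ⟨x, hx⟩ := es_exists_nonunit (M * D.natAbs) (by positivity) b hb
  obtain ⟨Q, hQ, hxQ⟩ := exists_max_ideal_of_mem_nonunits hx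
  have hMQ : ((M * D.natAbs : ℕ) : 𝓞 K) ∉ Q := fun h => by
    apply hQ.ne_top
    rw [Ideal.eq_top_iff_one]
    have := Q.add_mem hxQ (Q.mul_mem_right b (Q.mul_mem_right (x : 𝓞 K) h))
    simpa using this
  have hbot : Q ≠ ⊥ := Ring.ne_bot_of_isMaximal_of_not_isField hQ (RingOfIntegers.not_isField K)
  let _ := Ideal.Quotient.field Q
  have : Finite (𝓞 K ⧸ Q) := (Ideal.absNorm_ne_zero_iff Q).1 (by
    rw [ne_eq, Ideal.absNorm_eq_zero_iff]; exact hbot)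
  obtain ⟨p, hp⟩ := CharP.exists (𝓞 K ⧸ Q)
  have hpp : p.Prime := (CharP.char_is_prime_or_zero (𝓞 K ⧸ Q) p).resolve_right
    (CharP.char_ne_zero_of_finite (𝓞 K ⧸ Q) p)
  have := Fact.mk hpp
  have hcard : Ideal.absNorm Q = p := by
    have h1 : Function.Bijective (ZMod.castHom dvd_rfl (𝓞 K ⧸ Q) : ZMod p →+* _) := by
      refine ⟨RingHom.injective _, fun y => ?_⟩
      obtain ⟨y, rfl⟩ := Ideal.Quotient.mk_surjective y
      rw [← RingHom.mem_fieldRange]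
      set F := (ZMod.castHom dvd_rfl (𝓞 K ⧸ Q) : ZMod p →+* _).fieldRange
      set π := Ideal.Quotient.mk Q
      have hbF : π b ∈ F := by
        have h0 : π (1 - ((M * D.natAbs : ℕ) : 𝓞 K) * x * b) = 0 := Ideal.Quotient.eq_zero_iff_mem.2 hxQ
        have h2 : ((M * D.natAbs * x : ℕ) : 𝓞 K ⧸ Q) * π b = 1 := by
          rw [map_sub, map_mul, map_mul, map_natCast, map_natCast, map_one, sub_eq_zero] at h0
          rw [h0, Nat.cast_mul]
        rw [eq_inv_of_mul_eq_one_right h2]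
        exact F.inv_mem (natCast_mem F _)
      have hDF : (D : 𝓞 K ⧸ Q) ≠ 0 := fun h => by
        rw [← map_intCast π, Ideal.Quotient.eq_zero_iff_mem] at h
        apply hMQ
        rw [Nat.cast_mul]
        refine Q.mul_mem_left _ (Ideal.mem_of_dvd _ ?_ h)
        have : (D : 𝓞 K) ∣ ((D.natAbs : ℤ) : 𝓞 K) := Int.cast_dvd_cast _ _ (Int.dvd_natAbs.2 dvd_rfl)
        simpa using this
      obtain ⟨q, hq⟩ := hgen y
      have h3 : (D : 𝓞 K ⧸ Q) * π y = Polynomial.aeval (π b) q := by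
        rw [← map_intCast π, ← map_mul, hq]
        exact (Polynomial.map_aeval_eq_aeval_map (φ := RingHom.id ℤ) (by ext; simp) q b).trans (by simp)
      have h4 : Polynomial.aeval (π b) q ∈ F := by
        rw [Polynomial.aeval_eq_sum_range]
        exact F.sum_mem fun i _ => F.zsmul_mem (F.pow_mem hbF i) _
      rw [(eq_inv_mul_iff_mul_eq₀ hDF).2 h3]
      exact F.mul_mem (F.inv_mem (intCast_mem F _)) h4
    have := Nat.card_congr (Equiv.ofBijective _ h1)
    rw [Ideal.absNorm_apply, Submodule.cardQuot_apply, ← this, Nat.card_zmod]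
  refine ⟨p, Q, hpp, fun h => hMQ ?_, hQ.isPrime, hbot, hcard⟩
  have h1 := Ideal.absNorm_mem Q
  rw [hcard] at h1
  exact Ideal.mem_of_dvd _ (Nat.cast_dvd_cast (h.mul_right _)) h1

lemma es_spread {G ι : Type*} [AddCommGroup G] [Finite ι] (U : ι → Set G)
    (hU : ∀ i, (U i).Infinite) (W1 W : Set G) (hW1 : W1.Finite) (hW : W.Finite) :
    ∃ t : ι → G, (∀ i, t i ∈ U i ∧ t i ∉ W1) ∧ ∀ i j, i ≠ j → t i - t j ∉ W := by
  classical
  have := Fintype.ofFinite ι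
  suffices H : ∀ s : Finset ι, ∃ t : ι → G, (∀ i ∈ s, t i ∈ U i ∧ t i ∉ W1) ∧
      ∀ i ∈ s, ∀ j ∈ s, i ≠ j → t i - t j ∉ W by
    obtain ⟨t, h1, h2⟩ := H Finset.univ
    exact ⟨t, fun i => h1 i (Finset.mem_univ _),
      fun i j => h2 i (Finset.mem_univ _) j (Finset.mem_univ _)⟩
  intro s
  induction s using Finset.induction_on with
  | empty => exact ⟨fun _ => 0, by simp, by simp⟩
  | insert a s ha ih =>
    obtain ⟨t, h1, h2⟩ := ih
    have hfin : (W1 ∪ ⋃ j ∈ s, ((fun w => w + t j) '' W ∪ (fun w => t j - w) '' W)).Finite := by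
      refine hW1.union (Set.Finite.biUnion s.finite_toSet fun j _ => ?_)
      exact (hW.image _).union (hW.image _)
    obtain ⟨x, hxU, hx⟩ := ((hU a).sdiff hfin).nonempty
    simp only [Set.mem_union, Set.mem_iUnion, Set.mem_image, not_or, not_exists, not_and] at hx
    obtain ⟨hx1, hx2⟩ := hx
    refine ⟨Function.update t a x, ?_, ?_⟩
    · intro i hi
      rcases eq_or_ne i a with rfl | hia
      · simpa using ⟨hxU, hx1⟩
      · rw [Function.update_of_ne hia]
        exact h1 i (Finset.mem_of_mem_insert_of_ne hi hia)
    · intro i hi j hj hij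
      rcases eq_or_ne i a with rfl | hia
      · rw [Function.update_self, Function.update_of_ne hij.symm]
        intro hW'
        exact (hx2 j (Finset.mem_of_mem_insert_of_ne hj hij.symm)).1 _ hW' (by abel)
      · rw [Function.update_of_ne hia]
        rcases eq_or_ne j a with rfl | hja
        · rw [Function.update_self]
          intro hW'
          exact (hx2 i (Finset.mem_of_mem_insert_of_ne hi hia)).2 _ hW' (by abel)
        · rw [Function.update_of_ne hja]
          exact h2 i (Finset.mem_of_mem_insert_of_ne hi hia) j
            (Finset.mem_of_mem_insert_of_ne hj hja) hij

lemma es_infinite_coset {K : Type*} [Field K] [NumberField K] (J : Ideal (𝓞 K)) (hJ : J ≠ ⊥)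
    (c : 𝓞 K) : {x | x - c ∈ J}.Infinite := by
  obtain ⟨z, hz, hz0⟩ := Submodule.exists_mem_ne_zero_of_ne_bot hJ
  refine Set.infinite_of_injective_forall_mem (f := fun n : ℕ => c + (n : 𝓞 K) * z) ?_ ?_
  · intro m n h
    simpa [hz0] using h
  · intro n
    simpa using J.mul_mem_left _ hz

lemma es_build {K : Type*} [Field K] [NumberField K] (k : ℕ) (I : Ideal (𝓞 K)) (hI : I ≠ ⊥)
    {ι : Type*} [Finite ι] (a : ι → 𝓞 K) (s0 : 𝓞 K) (B : ℕ) (W1 W : Set (𝓞 K))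
    (hW1 : W1.Finite) (hW : W.Finite) :
    ∃ t : ι → 𝓞 K, (∀ i, t i - a i ∈ I) ∧
      (∀ P : Ideal (𝓞 K), P.IsPrime → P ≠ ⊥ → Ideal.absNorm P ≤ B → ¬ I ≤ P →
        ∀ i, t i - s0 ∈ P ^ k) ∧ (∀ i, t i ∉ W1) ∧ ∀ i j, i ≠ j → t i - t j ∉ W := by
  classical
  have hF : {P : Ideal (𝓞 K) | P.IsPrime ∧ P ≠ ⊥ ∧ Ideal.absNorm P ≤ B ∧ ¬ I ≤ P}.Finite :=
    (Ideal.finite_setOfPred_absNorm_le B).subset fun P hP => hP.2.2.1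
  set J : Ideal (𝓞 K) := ∏ P ∈ hF.toFinset, P ^ k with hJ
  have hJ0 : J ≠ ⊥ := by
    change J ≠ 0
    rw [hJ, Finset.prod_ne_zero_iff]
    intro P hP
    simp only [Set.Finite.mem_toFinset, Set.mem_ofPred_eq] at hP
    exact pow_ne_zero _ hP.2.1
  have hIJ : I ⊔ J = ⊤ := by
    apply Ideal.sup_prod_eq_top
    intro P hP
    simp only [Set.Finite.mem_toFinset, Set.mem_ofPred_eq] at hP
    apply Ideal.sup_pow_eq_top
    have hm : P.IsMaximal := hP.1.isMaximal hP.2.1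
    rw [sup_comm]
    by_contra h
    exact hP.2.2.2 (le_sup_right.trans (hm.eq_of_le h le_sup_left).ge)
  have hJP : ∀ P : Ideal (𝓞 K), P.IsPrime → P ≠ ⊥ → Ideal.absNorm P ≤ B → ¬ I ≤ P → J ≤ P ^ k := by
    intro P h1 h2 h3 h4
    apply Ideal.le_of_dvd
    exact Finset.dvd_prod_of_mem (fun P => P ^ k) (by simp [h1, h2, h3, h4])
  obtain ⟨i, hi, e, he, hie⟩ := Submodule.mem_sup.1 ((Ideal.eq_top_iff_one _).1 hIJ)
  have hIJ0 : I * J ≠ ⊥ := by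
    rw [← Ideal.zero_eq_bot]; exact mul_ne_zero hI hJ0
  obtain ⟨t, h1, h2⟩ := es_spread (fun j : ι => {x | x - (s0 + e * (a j - s0)) ∈ I * J})
    (fun j => es_infinite_coset _ hIJ0 _) W1 W hW1 hW
  refine ⟨t, fun j => ?_, fun P hP1 hP2 hP3 hP4 j => ?_, fun j => (h1 j).2, h2⟩
  · have h3 := (show I * J ≤ I from Ideal.mul_le_left) (h1 j).1
    have h4 : t j - a j = (t j - (s0 + e * (a j - s0))) - i * (a j - s0) := by
      linear_combination (a j - s0) * hie
    rw [h4]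
    exact I.sub_mem h3 (I.mul_mem_right _ hi)
  · apply hJP P hP1 hP2 hP3 hP4
    have h3 := (show I * J ≤ J from Ideal.mul_le_right) (h1 j).1
    have h4 : t j - s0 = (t j - (s0 + e * (a j - s0))) + e * (a j - s0) := by ring
    rw [h4]
    exact J.add_mem h3 (J.mul_mem_right _ he)

lemma es_missing {K : Type*} [Field K] [NumberField K] (I : Ideal (𝓞 K)) (X : Set (𝓞 K))
    (hX : X.Finite) (h : X.ncard < Ideal.absNorm I) : ∃ c, ∀ y ∈ X, y - c ∉ I := by
  by_contra! hc
  have : Ideal.absNorm I ≤ X.ncard := by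
    rw [Ideal.absNorm_apply, Submodule.cardQuot_apply]
    have := hX.fintype
    have hs : Function.Surjective (fun y : X => Ideal.Quotient.mk I y) := by
      intro q
      obtain ⟨c, rfl⟩ := Ideal.Quotient.mk_surjective q
      obtain ⟨y, hy, hyc⟩ := hc c
      exact ⟨⟨y, hy⟩, Ideal.Quotient.eq.2 hyc⟩
    exact Nat.card_le_card_of_surjective _ hs
  omega

lemma es_coprime {G : Type*} [AddCommGroup G] (p k : ℕ) (hp : p.Prime) (H : AddSubgroup G)
    (w : G) (z : ℤ) (hz : ¬ (p : ℤ) ∣ z) (h1 : p ^ k • w ∈ H) (h2 : z • w ∈ H) : w ∈ H := by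
  have hc : IsCoprime z ((p : ℤ) ^ k) :=
    (((Nat.prime_iff_prime_int.1 hp).coprime_iff_not_dvd.2 hz).symm).pow_right
  obtain ⟨u, v, huv⟩ := hc
  have : w = u • (z • w) + v • (p ^ k • w) := by
    rw [← natCast_zsmul w, smul_smul, smul_smul, ← add_smul, Nat.cast_pow, huv, one_smul]
  rw [this]
  exact H.add_mem (H.zsmul_mem h2 _) (H.zsmul_mem h1 _)

lemma es_avoid {G : Type*} [AddCommGroup G] (p k : ℕ) (hp : p.Prime) (L : AddSubgroup G)
    (F : Finset (AddSubgroup G)) (hF : F.card < p) (hFp : ∀ H ∈ F, ∀ x : G, p ^ k • x ∈ H)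
    (hFL : ∀ H ∈ F, ¬ L ≤ H) (a : G) : ∃ v ∈ L, ∀ H ∈ F, a + v ∉ H := by
  classical
  induction F using Finset.induction_on with
  | empty => exact ⟨0, L.zero_mem, by simp⟩
  | insert j F hj ih =>
    rw [Finset.card_insert_of_notMem hj] at hF
    obtain ⟨v, hv, hvF⟩ := ih (by omega) (fun H hH => hFp H (Finset.mem_insert_of_mem hH))
      (fun H hH => hFL H (Finset.mem_insert_of_mem hH))
    by_cases hvj : a + v ∉ j
    · refine ⟨v, hv, fun H hH => ?_⟩
      rcases Finset.mem_insert.1 hH with rfl | hH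
      · exact hvj
      · exact hvF H hH
    rw [not_not] at hvj
    obtain ⟨w, hwL, hwj⟩ := Set.not_subset.1 (hFL j (Finset.mem_insert_self _ _))
    obtain ⟨m, hm, hmF⟩ : ∃ m ∈ Finset.Ico 1 p, ∀ H ∈ F, a + v + m • w ∉ H := by
      by_contra! hcon
      choose! g hgF hg using hcon
      obtain ⟨m, hm, m', hm', hne, hgm⟩ := Finset.exists_ne_map_eq_of_card_lt_of_maps_to
        (s := Finset.Ico 1 p) (t := F) (f := g) (by simp; omega) (fun m hm => hgF m hm)
      have h1 := hg m hm
      have h2 := hg m' hm'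
      rw [← hgm] at h2
      have h3 := (g m).sub_mem h1 h2
      have h4 : (a + v + m • w) - (a + v + m' • w) = ((m : ℤ) - m') • w := by
        rw [sub_smul, natCast_zsmul, natCast_zsmul]; abel
      rw [h4] at h3
      rw [Finset.mem_Ico] at hm hm'
      have h5 : w ∈ g m := by
        refine es_coprime p k hp _ w _ ?_ (hFp _ (Finset.mem_insert_of_mem (hgF m (by simpa using hm))) w) h3
        intro hd
        have := Int.eq_zero_of_abs_lt_dvd hd (by rw [abs_lt]; omega)
        omega
      refine hvF (g m) (hgF m (by simpa using hm)) ?_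
      have := (g m).sub_mem h1 ((g m).nsmul_mem h5 m)
      simpa using this
    refine ⟨v + m • w, L.add_mem hv (L.nsmul_mem hwL m), fun H hH => ?_⟩
    rw [← add_assoc]
    rcases Finset.mem_insert.1 hH with rfl | hH
    · intro h
      have h1 := H.sub_mem h hvj
      rw [add_sub_cancel_left, ← natCast_zsmul] at h1
      rw [Finset.mem_Ico] at hm
      refine hwj (es_coprime p k hp H w m ?_ (hFp _ (Finset.mem_insert_self _ _) w) h1)
      rw [Int.natCast_dvd_natCast]
      exact Nat.not_dvd_of_pos_of_lt (by omega) hm.2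
    · exact hmF H hH

lemma es_card_primes {K : Type*} [Field K] [NumberField K] (p : ℕ) (hp : p.Prime)
    (F : Finset (Ideal (𝓞 K))) (hF : ∀ P ∈ F, P.IsPrime ∧ P ≠ ⊥ ∧ Ideal.absNorm P = p) :
    F.card ≤ Module.finrank ℤ (𝓞 K) := by
  have h1 : ∏ P ∈ F, P ∣ Ideal.span {(p : 𝓞 K)} := by
    refine Finset.prod_primes_dvd _ (fun P hP => ?_) (fun P hP => ?_)
    · exact Ideal.prime_of_isPrime (hF P hP).2.1 (hF P hP).1
    · rw [Ideal.dvd_span_singleton]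
      have := Ideal.absNorm_mem P
      rwa [(hF P hP).2.2] at this
  have h2 := Ideal.absNorm_dvd_absNorm_of_le (Ideal.le_of_dvd h1)
  rw [Ideal.absNorm_span_natCast, map_prod, Finset.prod_congr rfl (fun P hP => (hF P hP).2.2),
    Finset.prod_const] at h2
  exact (Nat.pow_dvd_pow_iff_le_right hp.one_lt).1 h2

lemma es_nhds {G : Type*} (U : Set (Set G)) (X : Set G) (hU : U ∈ nhds X) :
    ∃ W : Set G, W.Finite ∧ ∀ Y : Set G, (∀ w ∈ W, w ∈ Y ↔ w ∈ X) → Y ∈ U := by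
  rw [nhds_induced, Filter.mem_comap] at hU
  obtain ⟨V, hV, hVU⟩ := hU
  rw [nhds_pi, Filter.mem_pi] at hV
  obtain ⟨I, hI, t, ht, htV⟩ := hV
  refine ⟨I, hI, fun Y hY => hVU (htV ?_)⟩
  intro i hi
  have h1 := mem_of_mem_nhds (ht i)
  have h2 : (@decide (i ∈ Y) (Classical.propDecidable _)) =
      (@decide (i ∈ X) (Classical.propDecidable _)) := by
    rw [decide_eq_decide]; exact hY i hi
  change (@decide (i ∈ Y) (Classical.propDecidable _)) ∈ t i
  rw [h2]
  exact h1

lemma es_cont_mem {G : Type*} (y : G) :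
    Continuous fun Z : Set G => @decide (y ∈ Z) (Classical.propDecidable _) := by
  have h0 : Continuous (fun (S : Set G) (g : G) => @decide (g ∈ S) (Classical.propDecidable _)) :=
    continuous_induced_dom
  exact (continuous_apply y).comp h0

lemma es_isOpen_mem {G : Type*} (y : G) : IsOpen {Z : Set G | y ∈ Z} := by
  have h : Continuous fun Z : Set G => @decide (y ∈ Z) (Classical.propDecidable _) :=
    es_cont_mem y
  have h2 := (isOpen_discrete ({true} : Set Bool)).preimage h
  convert h2 using 1
  ext Z
  simp

lemma es_continuous {K : Type*} [Field K] [NumberField K] {k : ℕ}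
    (g : admissibleSets K k → admissibleSets K k) (φ : 𝓞 K → 𝓞 K)
    (h : ∀ X y, y ∈ (g X : Set (𝓞 K)) ↔ φ y ∈ (X : Set (𝓞 K))) : Continuous g := by
  refine Continuous.subtype_mk (f := fun X => (g X : Set (𝓞 K))) ?_ (fun X => (g X).2)
  refine continuous_induced_rng.2 (continuous_pi fun y => ?_)
  have h1 : Continuous fun X : admissibleSets K k =>
      @decide (φ y ∈ (X : Set (𝓞 K))) (Classical.propDecidable _) :=
    (es_cont_mem (φ y)).comp continuous_subtype_val
  convert h1 using 2 with X
  simp only [Function.comp]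
  rw [decide_eq_decide]
  exact h X y

lemma es_window {K : Type*} [Field K] [NumberField K] {k : ℕ}
    (f : admissibleSets K k ≃ₜ admissibleSets K k) (X : admissibleSets K k) (y : 𝓞 K)
    (hy : y ∈ (f X : Set (𝓞 K))) : ∃ W : Set (𝓞 K), W.Finite ∧ ∀ Y : admissibleSets K k,
      (∀ w ∈ W, w ∈ (Y : Set (𝓞 K)) ↔ w ∈ (X : Set (𝓞 K))) → y ∈ (f Y : Set (𝓞 K)) := by
  have h1 : {Y : admissibleSets K k | y ∈ (f Y : Set (𝓞 K))} ∈ nhds X :=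
    ((es_isOpen_mem y).preimage (continuous_subtype_val.comp f.continuous)).mem_nhds hy
  rw [nhds_subtype_eq_comap, Filter.mem_comap] at h1
  obtain ⟨V, hV, hVU⟩ := h1
  obtain ⟨W, hW, h⟩ := es_nhds V X hV
  exact ⟨W, hW, fun Y hY => hVU (h Y hY)⟩

lemma es_adm_mono {K : Type*} [Field K] [NumberField K] {k : ℕ} {X Y : Set (𝓞 K)}
    (h : X ⊆ Y) (hY : Y ∈ admissibleSets K k) : X ∈ admissibleSets K k := by
  intro P hP hP0
  obtain ⟨c, hc⟩ := hY P hP hP0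
  exact ⟨c, fun y hy => hc y (h hy)⟩

lemma es_adm_translate {K : Type*} [Field K] [NumberField K] {k : ℕ} {X : Set (𝓞 K)}
    (t : 𝓞 K) (hX : X ∈ admissibleSets K k) : (t + ·) '' X ∈ admissibleSets K k := by
  intro P hP hP0
  obtain ⟨c, hc⟩ := hX P hP hP0
  refine ⟨t + c, ?_⟩
  rintro _ ⟨y, hy, rfl⟩
  simpa using hc y hy

lemma es_adm_singleton {K : Type*} [Field K] [NumberField K] {k : ℕ} (hk : 1 ≤ k) (a : 𝓞 K) :
    {a} ∈ admissibleSets K k := by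
  intro P hP hP0
  refine ⟨a - 1, ?_⟩
  rintro _ rfl
  rw [sub_sub_cancel]
  intro h
  exact hP.ne_top ((Ideal.eq_top_iff_one _).2 (Ideal.pow_le_self (by omega) h))

def esEquivariant {K : Type*} [Field K] [NumberField K] {k : ℕ} (A : 𝓞 K ≃+ 𝓞 K)
    (f : admissibleSets K k ≃ₜ admissibleSets K k) : Prop :=
  ∀ (t : 𝓞 K) (X Y : ↥(admissibleSets K k)),
        (Y : Set (𝓞 K)) = (t + ·) '' (X : Set (𝓞 K)) →
        ((f Y : Set (𝓞 K))) = (A t + ·) '' ((f X : Set (𝓞 K)))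

lemma es_point {K : Type*} [Field K] [NumberField K] {k : ℕ} (hk : 1 ≤ k) {A : 𝓞 K ≃+ 𝓞 K}
    {f : admissibleSets K k ≃ₜ admissibleSets K k} (hf : esEquivariant A f) (d : 𝓞 K)
    (hd : d ∈ (f ⟨{0}, es_adm_singleton hk 0⟩ : Set (𝓞 K))) :
    ∃ W : Set (𝓞 K), W.Finite ∧ ∀ (X : admissibleSets K k) (t : 𝓞 K), t ∈ (X : Set (𝓞 K)) →
      (∀ x ∈ (X : Set (𝓞 K)), x ≠ t → x - t ∉ W) → d + A t ∈ (f X : Set (𝓞 K)) := by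
  obtain ⟨W, hW, h⟩ := es_window f _ d hd
  refine ⟨W, hW, fun X t ht hX => ?_⟩
  let X' : admissibleSets K k := ⟨(-t + ·) '' (X : Set (𝓞 K)), es_adm_translate _ X.2⟩
  have h1 : d ∈ (f X' : Set (𝓞 K)) := by
    apply h
    intro w hw
    constructor
    · rintro ⟨x, hx, rfl⟩
      by_contra hne
      refine hX x hx (fun he => hne ?_) ?_
      · simp [he]
      · simpa [sub_eq_neg_add] using hw
    · intro h0
      rw [Set.mem_singleton_iff] at h0
      exact ⟨t, ht, by simp [h0]⟩
  rw [hf t X' X (by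
    change (X : Set (𝓞 K)) = (t + ·) '' ((-t + ·) '' (X : Set (𝓞 K)))
    rw [Set.image_image]; simp only [add_neg_cancel_left, Set.image_id'])]
  exact ⟨d, h1, add_comm _ _⟩

lemma es_empty {K : Type*} [Field K] [NumberField K] {k : ℕ} {A : 𝓞 K ≃+ 𝓞 K}
    {f : admissibleSets K k ≃ₜ admissibleSets K k} (hf : esEquivariant A f)
    (E : admissibleSets K k) (hE : (E : Set (𝓞 K)) = ∅) : (f E : Set (𝓞 K)) = ∅ := by
  by_contra hne
  obtain ⟨y, hy⟩ := Set.nonempty_iff_ne_empty.2 hne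
  obtain ⟨p, Q, -, -, hQ, hQ0, -⟩ := es_exists_deg_one K 1 one_ne_zero
  obtain ⟨c, hc⟩ := (f E).2 Q hQ hQ0
  refine hc c ?_ (by simp)
  rw [hf (A.symm (c - y)) E E (by simp [hE])]
  exact ⟨y, hy, by simp⟩

lemma es_exists_d {K : Type*} [Field K] [NumberField K] {k : ℕ} (hk : 1 ≤ k) {A : 𝓞 K ≃+ 𝓞 K}
    {f : admissibleSets K k ≃ₜ admissibleSets K k} (hf : esEquivariant A f) :
    ∃ d, d ∈ (f ⟨{0}, es_adm_singleton hk 0⟩ : Set (𝓞 K)) := by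
  by_contra! h
  let E : admissibleSets K k := ⟨∅, es_adm_mono (Set.empty_subset _) (es_adm_singleton hk 0)⟩
  have h1 : f E = f ⟨{0}, es_adm_singleton hk 0⟩ := by
    apply Subtype.ext
    rw [es_empty hf E rfl]
    exact (Set.eq_empty_of_forall_notMem h).symm
  have h2 := congrArg Subtype.val (f.injective h1)
  exact (Set.singleton_ne_empty (0 : 𝓞 K)) h2.symm

lemma es_symm {K : Type*} [Field K] [NumberField K] {k : ℕ} {A : 𝓞 K ≃+ 𝓞 K}
    {f : admissibleSets K k ≃ₜ admissibleSets K k} (hf : esEquivariant A f) :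
    esEquivariant A.symm f.symm := by
  intro t X Y hXY
  let Z : admissibleSets K k :=
    ⟨(A.symm t + ·) '' (f.symm X : Set (𝓞 K)), es_adm_translate _ (f.symm X).2⟩
  have h1 := hf (A.symm t) (f.symm X) Z rfl
  rw [f.apply_symm_apply, A.apply_symm_apply, ← hXY] at h1
  rw [← Subtype.ext h1, f.symm_apply_apply]

lemma es_key {K : Type*} [Field K] [NumberField K] {k : ℕ} (hk : 1 ≤ k) {A : 𝓞 K ≃+ 𝓞 K}
    {f : admissibleSets K k ≃ₜ admissibleSets K k} (hf : esEquivariant A f) (M : ℕ) (hM : M ≠ 0) :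
    ∃ (p : ℕ) (P Q : Ideal (𝓞 K)), p.Prime ∧ ¬ p ∣ M ∧ P.IsPrime ∧ P ≠ ⊥ ∧ Ideal.absNorm P = p ∧
      Q.IsPrime ∧ Q ≠ ⊥ ∧ Ideal.absNorm Q = p ∧ ∀ x, A x ∈ Q ^ k ↔ x ∈ P ^ k := by
  classical
  obtain ⟨p, Q, hp, hpM, hQ, hQ0, hQp⟩ := es_exists_deg_one K
    (M * (Module.finrank ℤ (𝓞 K)).factorial) (mul_ne_zero hM (Nat.factorial_ne_zero _))
  have hpn : Module.finrank ℤ (𝓞 K) < p := by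
    by_contra h
    exact hpM (((hp.dvd_factorial).2 (not_lt.1 h)).mul_left _)
  by_contra hcon
  have hcon' : ∀ P : Ideal (𝓞 K), P.IsPrime → P ≠ ⊥ → Ideal.absNorm P = p →
      ¬ ∀ x, A x ∈ Q ^ k ↔ x ∈ P ^ k := fun P h1 h2 h3 h4 =>
    hcon ⟨p, P, Q, hp, fun h => hpM (h.mul_right _), h1, h2, h3, hQ, hQ0, hQp, h4⟩
  obtain ⟨d, hd⟩ := es_exists_d hk hf
  obtain ⟨W, hW, hpt⟩ := es_point hk hf d hd
  set L : AddSubgroup (𝓞 K) := (Q ^ k).toAddSubgroup.comap (A : 𝓞 K →+ 𝓞 K) with hL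
  have hLmem : ∀ x, x ∈ L ↔ A x ∈ Q ^ k := fun x => Iff.rfl
  have hLidx : L.index = p ^ k := by
    rw [hL, AddSubgroup.index_comap_of_surjective _ A.surjective, ← Ideal.absNorm_eq_index,
      map_pow, hQp]
  have hF0 : {P : Ideal (𝓞 K) | P.IsPrime ∧ P ≠ ⊥ ∧ Ideal.absNorm P = p}.Finite :=
    (Ideal.finite_setOfPred_absNorm_eq p).subset fun P hP => hP.2.2
  set F : Finset (AddSubgroup (𝓞 K)) := hF0.toFinset.image fun P => (P ^ k).toAddSubgroup with hF
  have hFc : F.card < p := by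
    refine (Finset.card_image_le.trans (es_card_primes p hp _ ?_)).trans_lt hpn
    intro P hP
    simpa using hP
  have hmemF : ∀ P : Ideal (𝓞 K), P.IsPrime → P ≠ ⊥ → Ideal.absNorm P = p →
      (P ^ k).toAddSubgroup ∈ F := fun P h1 h2 h3 =>
    Finset.mem_image.2 ⟨P, by simp [h1, h2, h3], rfl⟩
  have hFp : ∀ H ∈ F, ∀ x : 𝓞 K, p ^ k • x ∈ H := by
    intro H hH x
    obtain ⟨P, hP, rfl⟩ := Finset.mem_image.1 hH
    simp only [Set.Finite.mem_toFinset, Set.mem_ofPred_eq] at hP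
    have h1 := Ideal.absNorm_mem P
    rw [hP.2.2] at h1
    change p ^ k • x ∈ P ^ k
    rw [nsmul_eq_mul, Nat.cast_pow]
    exact Ideal.mul_mem_right _ _ (Ideal.pow_mem_pow h1 k)
  have hFL : ∀ H ∈ F, ¬ L ≤ H := by
    intro H hH hLH
    obtain ⟨P, hP, rfl⟩ := Finset.mem_image.1 hH
    simp only [Set.Finite.mem_toFinset, Set.mem_ofPred_eq] at hP
    have h1 : (P ^ k).toAddSubgroup.index = p ^ k := by
      rw [← Ideal.absNorm_eq_index, map_pow, hP.2.2]
    have h2 := AddSubgroup.relIndex_mul_index hLH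
    rw [h1, hLidx] at h2
    have h3 : L.relIndex (P ^ k).toAddSubgroup = 1 :=
      Nat.eq_of_mul_eq_mul_right (pow_pos hp.pos k) (by rw [h2, one_mul])
    rw [AddSubgroup.relIndex_eq_one] at h3
    exact hcon' P hP.1 hP.2.1 hP.2.2 fun x => ⟨fun h => hLH h, fun h => h3 h⟩
  have hfin : Finite (𝓞 K ⧸ Q ^ k) := (Ideal.absNorm_ne_zero_iff _).1 (by
    rw [map_pow, hQp]; exact pow_ne_zero _ hp.ne_zero)
  have hav : ∀ q : 𝓞 K ⧸ Q ^ k, ∃ a : 𝓞 K, Ideal.Quotient.mk (Q ^ k) (A a) = q ∧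
      ∀ H ∈ F, a ∉ H := by
    intro q
    obtain ⟨y, rfl⟩ := Ideal.Quotient.mk_surjective q
    obtain ⟨v, hv, h⟩ := es_avoid p k hp L F hFc hFp hFL (A.symm y)
    refine ⟨A.symm y + v, ?_, h⟩
    rw [Ideal.Quotient.eq, map_add, A.apply_symm_apply, add_sub_cancel_left]
    exact hv
  choose a ha haF using hav
  have hp0 : (p : 𝓞 K) ≠ 0 := by exact_mod_cast hp.ne_zero
  obtain ⟨t, ht1, ht2, -, ht4⟩ := es_build k (Ideal.span {(p : 𝓞 K)} ^ k)
    (pow_ne_zero k (by simpa using hp0)) a 0 (p ^ k) ∅ W Set.finite_empty hW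
  have hIH : ∀ P : Ideal (𝓞 K), (p : 𝓞 K) ∈ P → Ideal.span {(p : 𝓞 K)} ^ k ≤ P ^ k := fun P h =>
    Ideal.pow_right_mono ((Ideal.span_singleton_le_iff_mem _).2 h) k
  have hIL : ∀ i, A (t i) - A (a i) ∈ Q ^ k := by
    intro i
    have h1 := ht1 i
    rw [Ideal.span_singleton_pow, Ideal.mem_span_singleton] at h1
    obtain ⟨z, hz⟩ := h1
    rw [← map_sub, hz, ← Nat.cast_pow, ← nsmul_eq_mul, map_nsmul, nsmul_eq_mul, Nat.cast_pow]
    have h2 := Ideal.absNorm_mem Q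
    rw [hQp] at h2
    exact Ideal.mul_mem_right _ _ (Ideal.pow_mem_pow h2 k)
  have hTc : (Set.range t).ncard ≤ p ^ k := by
    rw [← Set.image_univ]
    refine (Set.ncard_image_le Set.finite_univ).trans ?_
    rw [Set.ncard_univ, ← Submodule.cardQuot_apply, ← Ideal.absNorm_apply, map_pow, hQp]
  have hT : Set.range t ∈ admissibleSets K k := by
    intro P hP hP0
    by_cases hpP : (p : 𝓞 K) ∈ P
    · by_cases hPp : Ideal.absNorm P = p
      · refine ⟨0, ?_⟩
        rintro _ ⟨i, rfl⟩ hi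
        rw [sub_zero] at hi
        refine haF i _ (hmemF P hP hP0 hPp) ?_
        have := (P ^ k).sub_mem hi (hIH P hpP (ht1 i))
        rw [sub_sub_cancel] at this
        exact this
      · refine es_missing _ _ (Set.finite_range t) (hTc.trans_lt ?_)
        rw [map_pow]
        refine Nat.pow_lt_pow_left (lt_of_le_of_ne ?_ (Ne.symm hPp)) (by omega)
        by_contra hlt
        rw [not_le] at hlt
        have hN0 : Ideal.absNorm P ≠ 0 := by rwa [ne_eq, Ideal.absNorm_eq_zero_iff]
        have hco : Nat.Coprime p (Ideal.absNorm P) :=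
          (hp.coprime_iff_not_dvd).2 (Nat.not_dvd_of_pos_of_lt (Nat.pos_of_ne_zero hN0) hlt)
        obtain ⟨u, v, huv⟩ := Nat.isCoprime_iff_coprime.2 hco
        apply hP.ne_top
        rw [Ideal.eq_top_iff_one]
        have h1 : (1 : 𝓞 K) = (u : 𝓞 K) * (p : 𝓞 K) + (v : 𝓞 K) * (Ideal.absNorm P : 𝓞 K) := by
          have h2 := congrArg (fun z : ℤ => (z : 𝓞 K)) huv
          push_cast at h2
          exact h2.symm
        rw [h1]
        exact P.add_mem (P.mul_mem_left _ hpP) (P.mul_mem_left _ (Ideal.absNorm_mem P))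
    · by_cases hB : Ideal.absNorm P ≤ p ^ k
      · refine ⟨1, ?_⟩
        rintro _ ⟨i, rfl⟩ hi
        have h1 := ht2 P hP hP0 hB (fun h => hpP (by
          rw [Ideal.IsPrime.pow_le_iff (by omega)] at h
          exact h (Ideal.mem_span_singleton_self _))) i
        have h2 := (P ^ k).sub_mem h1 hi
        rw [sub_sub_sub_cancel_left, sub_zero] at h2
        exact hP.ne_top ((Ideal.eq_top_iff_one _).2 (Ideal.pow_le_self (by omega) h2))
      · refine es_missing _ _ (Set.finite_range t) (hTc.trans_lt ?_)
        rw [map_pow]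
        exact (not_le.1 hB).trans_le (Nat.le_self_pow (by omega) _)
  obtain ⟨c, hc⟩ := (f ⟨_, hT⟩).2 Q hQ hQ0
  set i := Ideal.Quotient.mk (Q ^ k) (c - d) with hi
  refine hc (d + A (t i)) (hpt ⟨_, hT⟩ (t i) ⟨i, rfl⟩ ?_) ?_
  · rintro _ ⟨j, rfl⟩ hj
    exact ht4 j i fun h => hj (by rw [h])
  · have h1 := ha i
    rw [hi, Ideal.Quotient.eq] at h1
    have h2 := (Q ^ k).add_mem (hIL i) h1
    convert h2 using 1
    ring

lemma es_subset_fin {K : Type*} [Field K] [NumberField K] {k : ℕ} (hk : 1 ≤ k) {A : 𝓞 K ≃+ 𝓞 K}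
    {f : admissibleSets K k ≃ₜ admissibleSets K k} (hf : esEquivariant A f) (d : 𝓞 K)
    (hd : d ∈ (f ⟨{0}, es_adm_singleton hk 0⟩ : Set (𝓞 K))) (S : admissibleSets K k)
    (hS : (S : Set (𝓞 K)).Finite) (s : 𝓞 K) (hs : d + A s ∈ (f S : Set (𝓞 K))) :
    s ∈ (S : Set (𝓞 K)) := by
  classical
  by_contra hsS
  rcases (S : Set (𝓞 K)).eq_empty_or_nonempty with hE | ⟨s0, hs0⟩
  · rw [es_empty hf S hE] at hs
    exact hs
  obtain ⟨W, hW, hpt⟩ := es_point hk hf d hd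
  obtain ⟨W', hW', hwin⟩ := es_window f S _ hs
  obtain ⟨p, P, Q, hp, hpM, hP, hP0, hPp, hQ, hQ0, hQp, hA⟩ := es_key hk hf
    (∏ x ∈ hS.toFinset, (Algebra.norm ℤ (x - s)).natAbs) (by
      rw [Finset.prod_ne_zero_iff]
      intro x hx
      rw [Set.Finite.mem_toFinset] at hx
      rw [ne_eq, Int.natAbs_eq_zero, Algebra.norm_eq_zero_iff, sub_eq_zero]
      rintro rfl
      exact hsS hx)
  have hSP : ∀ x ∈ (S : Set (𝓞 K)), x - s ∉ P ^ k := by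
    intro x hx h
    have h1 := Ideal.absNorm_dvd_norm_of_mem (Ideal.pow_le_self (by omega) h : x - s ∈ P)
    rw [hPp, ← Int.dvd_natAbs, Int.natCast_dvd_natCast] at h1
    exact hpM (h1.trans (Finset.dvd_prod_of_mem (fun x => (Algebra.norm ℤ (x - s)).natAbs)
      (by simpa using hx)))
  have hfin : Finite (𝓞 K ⧸ P ^ k) := (Ideal.absNorm_ne_zero_iff _).1 (by
    rw [map_pow, hPp]; exact pow_ne_zero _ hp.ne_zero)
  obtain ⟨t, ht1, ht2, ht3, ht4⟩ := es_build k (P ^ k) (pow_ne_zero k hP0)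
    (fun q : {q : 𝓞 K ⧸ P ^ k // q ≠ Ideal.Quotient.mk (P ^ k) s} => Quotient.out q.1) s0
    ((S : Set (𝓞 K)).ncard + p ^ k) (W' ∪ ⋃ x ∈ (S : Set (𝓞 K)), (fun w => x - w) '' W) W
    (hW'.union (hS.biUnion fun x _ => hW.image _)) hW
  have ht1' : ∀ i, Ideal.Quotient.mk (P ^ k) (t i) = i.1 := fun i => by
    rw [Ideal.Quotient.eq.2 (ht1 i)]
    exact Ideal.Quotient.mk_out i.1
  have hTc : (Set.range t).ncard ≤ p ^ k := by
    rw [← Set.image_univ]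
    refine (Set.ncard_image_le Set.finite_univ).trans ?_
    rw [Set.ncard_univ]
    refine (Nat.card_le_card_of_injective _ Subtype.val_injective).trans ?_
    rw [← Submodule.cardQuot_apply, ← Ideal.absNorm_apply, map_pow, hPp]
  have hX : (S : Set (𝓞 K)) ∪ Set.range t ∈ admissibleSets K k := by
    intro R hR hR0
    by_cases hRP : P ^ k ≤ R
    · have hPR : P = R := by
        rw [Ideal.IsPrime.pow_le_iff (by omega)] at hRP
        exact (hP.isMaximal hP0).eq_of_le hR.ne_top hRP
      subst hPR
      refine ⟨s, ?_⟩
      rintro y (hy | ⟨i, rfl⟩)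
      · exact hSP y hy
      · intro h
        rw [← Ideal.Quotient.eq, ht1'] at h
        exact i.2 h
    · by_cases hB : Ideal.absNorm R ≤ (S : Set (𝓞 K)).ncard + p ^ k
      · obtain ⟨c, hc⟩ := S.2 R hR hR0
        refine ⟨c, ?_⟩
        rintro y (hy | ⟨i, rfl⟩)
        · exact hc y hy
        · intro h
          refine hc s0 hs0 ?_
          have := (R ^ k).sub_mem h (ht2 R hR hR0 hB hRP i)
          rwa [sub_sub_sub_cancel_left] at this
      · refine es_missing _ _ (hS.union (Set.finite_range t)) ?_
        rw [map_pow]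
        refine lt_of_le_of_lt ((Set.ncard_union_le _ _).trans (Nat.add_le_add_left hTc _)) ?_
        exact (not_le.1 hB).trans_le (Nat.le_self_pow (by omega) _)
  obtain ⟨c, hc⟩ := (f ⟨_, hX⟩).2 Q hQ hQ0
  by_cases hcs : Ideal.Quotient.mk (P ^ k) (A.symm (c - d)) = Ideal.Quotient.mk (P ^ k) s
  · refine hc (d + A s) (hwin _ ?_) ?_
    · intro w hw
      refine ⟨?_, fun h => Or.inl h⟩
      rintro (h | ⟨i, rfl⟩)
      · exact h
      · exact absurd (Or.inl hw) (ht3 i)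
    · rw [eq_comm, Ideal.Quotient.eq, ← hA, map_sub, A.apply_symm_apply] at hcs
      convert hcs using 1
      ring
  · set i : {q : 𝓞 K ⧸ P ^ k // q ≠ Ideal.Quotient.mk (P ^ k) s} := ⟨_, hcs⟩ with hi
    refine hc (d + A (t i)) (hpt _ (t i) (Or.inr ⟨i, rfl⟩) ?_) ?_
    · rintro y (hy | ⟨j, rfl⟩) hne hyW
      · refine ht3 i (Or.inr ?_)
        simp only [Set.mem_iUnion]
        exact ⟨y, hy, _, hyW, by simp⟩
      · exact ht4 j i (fun h => hne (by rw [h])) hyW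
    · have h1 := ht1' i
      rw [hi] at h1
      rw [Ideal.Quotient.eq, ← hA, map_sub, A.apply_symm_apply] at h1
      convert h1 using 1
      ring

lemma es_subset {K : Type*} [Field K] [NumberField K] {k : ℕ} (hk : 1 ≤ k) {A : 𝓞 K ≃+ 𝓞 K}
    {f : admissibleSets K k ≃ₜ admissibleSets K k} (hf : esEquivariant A f) (d : 𝓞 K)
    (hd : d ∈ (f ⟨{0}, es_adm_singleton hk 0⟩ : Set (𝓞 K))) (X : admissibleSets K k)
    (s : 𝓞 K) (hs : d + A s ∈ (f X : Set (𝓞 K))) : s ∈ (X : Set (𝓞 K)) := by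
  obtain ⟨W, hW, hWf⟩ := es_window f X _ hs
  have hsub : (X : Set (𝓞 K)) ∩ W ⊆ X := Set.inter_subset_left
  have := es_subset_fin hk hf d hd ⟨(X : Set (𝓞 K)) ∩ W, es_adm_mono hsub X.2⟩
    (hW.subset Set.inter_subset_right) s (hWf _ (fun w hw => ⟨fun h => h.1, fun h => ⟨h, hw⟩⟩))
  exact this.1

lemma es_eq {K : Type*} [Field K] [NumberField K] {k : ℕ} (hk : 1 ≤ k) {A : 𝓞 K ≃+ 𝓞 K}
    {f : admissibleSets K k ≃ₜ admissibleSets K k} (hf : esEquivariant A f) :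
    ∃ d : 𝓞 K, ∀ X : admissibleSets K k,
      (f X : Set (𝓞 K)) = (fun x => d + A x) '' (X : Set (𝓞 K)) := by
  obtain ⟨d, hd⟩ := es_exists_d hk hf
  obtain ⟨e, he⟩ := es_exists_d hk (es_symm hf)
  have h1 : ∀ (X : admissibleSets K k), ∀ y ∈ (f X : Set (𝓞 K)),
      A.symm (y - d) ∈ (X : Set (𝓞 K)) := by
    intro X y hy
    refine es_subset hk hf d hd X _ ?_
    simpa using hy
  have h2 : ∀ (X : admissibleSets K k), ∀ x ∈ (X : Set (𝓞 K)),
      A (x - e) ∈ (f X : Set (𝓞 K)) := by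
    intro X x hx
    refine es_subset hk (es_symm hf) e he (f X) _ ?_
    simpa using hx
  have h3 : A e + d = 0 := by
    have := h1 ⟨{0}, es_adm_singleton hk 0⟩ _ (h2 _ 0 rfl)
    have h4 : A.symm (A (0 - e) - d) = 0 := this
    have h5 := congrArg A h4
    rw [AddEquiv.apply_symm_apply, map_zero, zero_sub, map_neg] at h5
    linear_combination -h5
  refine ⟨d, fun X => ?_⟩
  ext y
  constructor
  · intro hy
    exact ⟨_, h1 X y hy, by simp⟩
  · rintro ⟨x, hx, rfl⟩
    have := h2 X x hx
    rw [map_sub] at this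
    have e1 : A x - A e = d + A x := by linear_combination -h3
    rwa [e1] at this

lemma es_unram {K : Type*} [Field K] [NumberField K] (p : ℕ) (hp : p.Prime) (P : Ideal (𝓞 K))
    (hPp : Ideal.absNorm P = p) (hd : ¬ p ∣ (discr K).natAbs) : (p : 𝓞 K) ∉ P ^ 2 := by
  intro h
  have hmax : (Ideal.span {(p : ℤ)}).IsMaximal := by
    apply PrincipalIdealRing.isMaximal_of_irreducible
    exact (Nat.prime_iff_prime_int.1 hp).irreducible
  have h1 : P ^ (2 - 1) ∣ differentIdeal ℤ (𝓞 K) := by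
    apply pow_sub_one_dvd_differentIdeal ℤ (p := Ideal.span {(p : ℤ)}) P 2
    · simpa using hp.ne_zero
    · rw [Ideal.map_span, Set.image_singleton, Ideal.dvd_span_singleton]
      simpa using h
  simp only [Nat.add_one_sub_one, pow_one] at h1
  have h2 := map_dvd (Ideal.absNorm (S := 𝓞 K)) h1
  rw [hPp, NumberField.absNorm_differentIdeal K] at h2
  exact hd h2

lemma es_mul {K : Type*} [Field K] [NumberField K] {k : ℕ} (hk : 1 ≤ k) {A : 𝓞 K ≃+ 𝓞 K}
    {f : admissibleSets K k ≃ₜ admissibleSets K k} (hf : esEquivariant A f) (x y : 𝓞 K) :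
    A (x * y) * A 1 = A x * A y := by
  by_contra hne
  have hz : A (x * y) * A 1 - A x * A y ≠ 0 := sub_ne_zero.2 hne
  set z := A (x * y) * A 1 - A x * A y with hzdef
  obtain ⟨p, P, Q, hp, hpM, hP, hP0, hPp, hQ, hQ0, hQp, hA⟩ := es_key hk hf
    ((Algebra.norm ℤ z).natAbs * (discr K).natAbs)
    (mul_ne_zero (by simpa using hz) (by simpa using NumberField.discr_ne_zero K))
  have hp2 := es_unram p hp P hPp (fun h => hpM (h.mul_left _))
  have hpz : z ∉ Q := by
    intro h
    have h1 := Ideal.absNorm_dvd_norm_of_mem h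
    rw [hQp] at h1
    exact hpM ((Int.natCast_dvd.1 h1).mul_right _)
  have hpQ : (p : 𝓞 K) ∈ Q := by
    have := Ideal.absNorm_mem Q
    rwa [hQp] at this
  have hPJ : P ≤ P ^ k ⊔ Ideal.span {(p : 𝓞 K)} := by
    have hdvd : P ^ k ⊔ Ideal.span {(p : 𝓞 K)} ∣ P ^ k := Ideal.dvd_iff_le.2 le_sup_left
    obtain ⟨j, hj, hass⟩ := (dvd_prime_pow (Ideal.prime_of_isPrime hP0 hP) k).1 hdvd
    rw [associated_iff_eq] at hass
    rw [hass]
    have hj2 : j < 2 := by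
      by_contra hj2
      apply hp2
      apply Ideal.pow_le_pow_right (not_lt.1 hj2)
      rw [← hass]
      exact Ideal.mem_sup_right (Ideal.mem_span_singleton_self _)
    calc P = P ^ 1 := (pow_one P).symm
      _ ≤ P ^ j := Ideal.pow_le_pow_right (by omega)
  have hAP : ∀ x ∈ P, A x ∈ Q := by
    intro x hx
    obtain ⟨a, ha, b, hb, rfl⟩ := Submodule.mem_sup.1 (hPJ hx)
    obtain ⟨c, rfl⟩ := Ideal.mem_span_singleton.1 hb
    rw [map_add]
    refine Q.add_mem (Ideal.pow_le_self (by omega) ((hA a).2 ha)) ?_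
    rw [← nsmul_eq_mul, map_nsmul, nsmul_eq_mul]
    exact Q.mul_mem_right _ hpQ
  have hint : ∀ x : 𝓞 K, ∃ a : ℤ, x - a ∈ P := by
    intro x
    haveI : Fact p.Prime := ⟨hp⟩
    have hcard : Nat.card (𝓞 K ⧸ P) = p := by
      rw [← hPp, Ideal.absNorm_apply, Submodule.cardQuot_apply]
    have h1 : (Ideal.Quotient.mk P 1) ≠ 0 := by
      rw [ne_eq, Ideal.Quotient.eq_zero_iff_mem, ← Ideal.eq_top_iff_one]
      exact hP.ne_top
    obtain ⟨a, ha⟩ := mem_zmultiples_of_prime_card hcard h1 (g' := Ideal.Quotient.mk P x)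
    refine ⟨a, ?_⟩
    rw [← Ideal.Quotient.eq]
    rw [← ha]
    simp
  have hint2 : ∀ x : 𝓞 K, ∀ a : ℤ, x - a ∈ P → A x - a * A 1 ∈ Q := by
    intro x a h
    have h1 := hAP _ h
    rw [map_sub] at h1
    have h2 : A (a : 𝓞 K) = a * A 1 := by
      rw [← zsmul_eq_mul, ← map_zsmul, zsmul_eq_mul, mul_one]
    rwa [h2] at h1
  obtain ⟨a, ha⟩ := hint x
  obtain ⟨b, hb⟩ := hint y
  have hab : x * y - ((a * b : ℤ) : 𝓞 K) ∈ P := by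
    have e : x * y - ((a * b : ℤ) : 𝓞 K) = (x - a) * y + a * (y - b) := by push_cast; ring
    rw [e]
    exact P.add_mem (P.mul_mem_right _ ha) (P.mul_mem_left _ hb)
  have h1 := hint2 _ _ ha
  have h2 := hint2 _ _ hb
  have h3 := hint2 _ _ hab
  apply hpz
  have e : z = (A (x * y) - ((a * b : ℤ) : 𝓞 K) * A 1) * A 1 - (A x - a * A 1) * A y
      - (a * A 1) * (A y - b * A 1) := by
    rw [hzdef]; push_cast; ring
  rw [e]
  exact Q.sub_mem (Q.sub_mem (Q.mul_mem_right _ h3) (Q.mul_mem_right _ h1)) (Q.mul_mem_left _ h2)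

lemma es_tau {K : Type*} [Field K] [NumberField K] (A : 𝓞 K ≃+ 𝓞 K)
    (hA : ∀ x y, A (x * y) * A 1 = A x * A y) :
    ∃ (τ : K ≃+* K) (ε : (𝓞 K)ˣ), ∀ x : 𝓞 K, (A x : K) = ((ε : 𝓞 K) : K) * τ (x : K) := by
  have h10 : A 1 ≠ 0 := by simp
  have h1K : ((A 1 : 𝓞 K) : K) ≠ 0 := by simpa using h10
  have hAK : ∀ x y, ((A (x * y) : 𝓞 K) : K) * (A 1 : 𝓞 K) = (A x : 𝓞 K) * (A y : 𝓞 K) := by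
    intro x y
    exact_mod_cast congrArg (fun z : 𝓞 K => (z : K)) (hA x y)
  let g : 𝓞 K →+* K :=
    { toFun := fun x => (A x : K) / (A 1 : 𝓞 K)
      map_one' := div_self h1K
      map_zero' := by simp
      map_add' := fun x y => by simp [add_div]
      map_mul' := fun x y => by
        field_simp
        linear_combination hAK x y }
  have hg : Function.Injective g := by
    intro x y h
    have h2 : (A x : K) / (A 1 : 𝓞 K) = (A y : K) / (A 1 : 𝓞 K) := h
    rw [div_left_inj' h1K] at h2
    exact A.injective (RingOfIntegers.ext h2)
  let φ : K →+* K := IsFractionRing.lift (A := 𝓞 K) (K := K) hg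
  have hφ : ∀ x : 𝓞 K, φ (x : K) = (A x : K) / (A 1 : 𝓞 K) := fun x =>
    IsFractionRing.lift_algebraMap hg x
  have hbij : Function.Bijective φ := by
    refine ⟨φ.injective, ?_⟩
    exact (LinearMap.injective_iff_surjective (f := φ.toRatAlgHom.toLinearMap)).1 φ.injective
  let τ : K ≃+* K := RingEquiv.ofBijective φ hbij
  have hτ : ∀ x : 𝓞 K, (A x : K) = (A 1 : 𝓞 K) * τ (x : K) := by
    intro x
    have : τ (x : K) = (A x : K) / (A 1 : 𝓞 K) := hφ x
    rw [this]
    field_simp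
  have hu : IsUnit (A 1) := by
    obtain ⟨x, hx⟩ := A.surjective 1
    refine IsUnit.of_mul_eq_one (RingOfIntegers.mapRingEquiv τ x) ?_
    apply RingOfIntegers.ext
    have := hτ x
    rw [hx] at this
    simpa using this.symm
  obtain ⟨ε, hε⟩ := hu
  exact ⟨τ, ε, fun x => by rw [hε]; exact hτ x⟩

lemma es_adm_image {K : Type*} [Field K] [NumberField K] {k : ℕ} (σ : 𝓞 K ≃+* 𝓞 K) (ε : (𝓞 K)ˣ)
    (t : 𝓞 K) (X : Set (𝓞 K)) (hX : X ∈ admissibleSets K k) :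
    (fun x => t + ε * σ x) '' X ∈ admissibleSets K k := by
  intro P hP hP0
  have hP' : (P.comap σ).IsPrime := Ideal.comap_isPrime σ P
  obtain ⟨c, hc⟩ := hX (P.comap σ) hP' (by
    intro h
    apply hP0
    rw [eq_bot_iff]
    intro x hx
    have h1 : σ.symm x ∈ P.comap σ := by
      rw [Ideal.mem_comap]; simpa using hx
    rw [h] at h1
    simpa using h1)
  refine ⟨t + ε * σ c, ?_⟩
  rintro _ ⟨x, hx, rfl⟩ h
  apply hc x hx
  have h1 : σ (x - c) ∈ P ^ k := by
    have h2 := (P ^ k).mul_mem_left ((ε⁻¹ : (𝓞 K)ˣ) : 𝓞 K) h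
    have e : ((ε⁻¹ : (𝓞 K)ˣ) : 𝓞 K) * ((fun x => t + ε * σ x) x - (t + ε * σ c)) = σ (x - c) := by
      rw [map_sub]
      linear_combination (σ x - σ c) * ε.inv_mul
    rwa [e] at h2
  have h3 : (P.comap σ) ^ k = (P ^ k).comap σ := by
    have hm : ∀ I : Ideal (𝓞 K), I.comap σ = I.map σ.symm := fun I => (Ideal.map_symm σ).symm
    rw [hm, hm, Ideal.map_pow]
  rw [h3]
  exact h1

lemma es_converse {K : Type*} [Field K] [NumberField K] {k : ℕ}
    (τ : K ≃+* K) (ε : (𝓞 K)ˣ) (t₀ : 𝓞 K) (A : 𝓞 K ≃+ 𝓞 K)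
    (hA : ∀ x : 𝓞 K, (A x : K) = ((ε : 𝓞 K) : K) * τ (x : K)) :
      (∀ X ∈ admissibleSets K k, (fun x => t₀ + A x) '' X ∈ admissibleSets K k) ∧
      ∃ f : ↥(admissibleSets K k) ≃ₜ ↥(admissibleSets K k),
        (∀ X : ↥(admissibleSets K k),
          ((f X : Set (𝓞 K))) = (fun x => t₀ + A x) '' (X : Set (𝓞 K))) ∧
        ∀ (t : 𝓞 K) (X Y : ↥(admissibleSets K k)),
          (Y : Set (𝓞 K)) = (t + ·) '' (X : Set (𝓞 K)) →
          ((f Y : Set (𝓞 K))) = (A t + ·) '' ((f X : Set (𝓞 K))) := by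
  let σ : 𝓞 K ≃+* 𝓞 K := RingOfIntegers.mapRingEquiv τ
  have hAσ : ∀ x, A x = ε * σ x := by
    intro x
    apply RingOfIntegers.ext
    rw [hA]
    simp [σ]
  have hadm : ∀ X ∈ admissibleSets K k, (fun x => t₀ + A x) '' X ∈ admissibleSets K k := by
    intro X hX
    simp only [hAσ]
    exact es_adm_image σ ε t₀ X hX
  have hAs : ∀ y, A.symm y = (Units.map σ.symm.toRingHom.toMonoidHom ε⁻¹ : (𝓞 K)ˣ) * σ.symm y := by
    intro y
    rw [AddEquiv.symm_apply_eq, hAσ, map_mul]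
    simp
  have hadm' : ∀ X ∈ admissibleSets K k,
      (fun y => -A.symm t₀ + A.symm y) '' X ∈ admissibleSets K k := by
    intro X hX
    simp only [hAs]
    exact es_adm_image σ.symm _ _ X hX
  have hm : ∀ (X : Set (𝓞 K)) y, y ∈ (fun x => t₀ + A x) '' X ↔ -A.symm t₀ + A.symm y ∈ X := by
    intro X y
    constructor
    · rintro ⟨x, hx, rfl⟩
      simpa using hx
    · intro h
      exact ⟨_, h, by simp⟩
  have hm' : ∀ (X : Set (𝓞 K)) x,
      x ∈ (fun y => -A.symm t₀ + A.symm y) '' X ↔ t₀ + A x ∈ X := by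
    intro X y
    constructor
    · rintro ⟨x, hx, rfl⟩
      simpa using hx
    · intro h
      exact ⟨_, h, by simp⟩
  let F : admissibleSets K k → admissibleSets K k := fun X => ⟨_, hadm X X.2⟩
  let G : admissibleSets K k → admissibleSets K k := fun X => ⟨_, hadm' X X.2⟩
  let f : ↥(admissibleSets K k) ≃ₜ ↥(admissibleSets K k) :=
    { toFun := F
      invFun := G
      left_inv := fun X => by
        apply Subtype.ext
        ext x
        change x ∈ (fun y => -A.symm t₀ + A.symm y) '' ((fun x => t₀ + A x) '' (X : Set (𝓞 K))) ↔ _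
        rw [hm', hm]
        simp
      right_inv := fun X => by
        apply Subtype.ext
        ext x
        change x ∈ (fun x => t₀ + A x) '' ((fun y => -A.symm t₀ + A.symm y) '' (X : Set (𝓞 K))) ↔ _
        rw [hm, hm']
        simp
      continuous_toFun := es_continuous F _ (fun X y => hm X y)
      continuous_invFun := es_continuous G _ (fun X y => hm' X y) }
  refine ⟨hadm, f, fun X => rfl, ?_⟩
  intro t X Y hY
  change (fun x => t₀ + A x) '' (Y : Set (𝓞 K)) =
    (A t + ·) '' ((fun x => t₀ + A x) '' (X : Set (𝓞 K)))
  rw [hY, Set.image_image, Set.image_image]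
  congr 1
  funext x
  simp only [map_add]
  ring

/-- Description of the extended symmetry group of `𝔻_{K,k}`.

Forward direction: every extended symmetry `(A, f)` (with `A` an additive automorphism
of `𝓞 K` and `f` a self-homeomorphism of `𝕏_{K,k}` satisfying
`f(t + X) = A(t) + f(X)`) is of the form `A(x) = ε·τ(x)` and `f(X) = t₀ + ε·τ(X)` for a
field automorphism `τ` of `K`, a unit `ε ∈ 𝓞 K ˣ` and `t₀ ∈ 𝓞 K`.

Converse direction: every such pair is an extended symmetry; in particular
`x ↦ t₀ + ε·τ(x)` maps `𝕏_{K,k}` into itself and induces a homeomorphism `f`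
satisfying the intertwining relation. -/
theorem extended_symmetries {K : Type*} [Field K] [NumberField K]
    (k : ℕ) (hk : 1 ≤ k) :
    (∀ (A : 𝓞 K ≃+ 𝓞 K) (f : ↥(admissibleSets K k) ≃ₜ ↥(admissibleSets K k)),
      (∀ (t : 𝓞 K) (X Y : ↥(admissibleSets K k)),
        (Y : Set (𝓞 K)) = (t + ·) '' (X : Set (𝓞 K)) →
        ((f Y : Set (𝓞 K))) = (A t + ·) '' ((f X : Set (𝓞 K)))) →
      ∃ (τ : K ≃+* K) (ε : (𝓞 K)ˣ) (t₀ : 𝓞 K),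
        (∀ x : 𝓞 K, (A x : K) = ((ε : 𝓞 K) : K) * τ (x : K)) ∧
        ∀ X : ↥(admissibleSets K k),
          ((f X : Set (𝓞 K))) = (fun x => t₀ + A x) '' (X : Set (𝓞 K))) ∧
    (∀ (τ : K ≃+* K) (ε : (𝓞 K)ˣ) (t₀ : 𝓞 K) (A : 𝓞 K ≃+ 𝓞 K),
      (∀ x : 𝓞 K, (A x : K) = ((ε : 𝓞 K) : K) * τ (x : K)) →
      (∀ X ∈ admissibleSets K k, (fun x => t₀ + A x) '' X ∈ admissibleSets K k) ∧
      ∃ f : ↥(admissibleSets K k) ≃ₜ ↥(admissibleSets K k),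
        (∀ X : ↥(admissibleSets K k),
          ((f X : Set (𝓞 K))) = (fun x => t₀ + A x) '' (X : Set (𝓞 K))) ∧
        ∀ (t : 𝓞 K) (X Y : ↥(admissibleSets K k)),
          (Y : Set (𝓞 K)) = (t + ·) '' (X : Set (𝓞 K)) →
          ((f Y : Set (𝓞 K))) = (A t + ·) '' ((f X : Set (𝓞 K)))) := by
  refine ⟨fun A f hf => ?_, fun τ ε t₀ A hA => es_converse τ ε t₀ A hA⟩
  have hf' : esEquivariant A f := hf
  obtain ⟨d, hd⟩ := es_eq hk hf'
  obtain ⟨τ, ε, hτ⟩ := es_tau A (es_mul hk hf')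
  exact ⟨τ, ε, d, hτ, hd⟩
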